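/- Fix positive reals p₋₁, p₀, p₁ with p₁ = p₋₁ (zero drift), let P(1) = p₋₁ + p₀ + p₁ and P″(1) = 2p₋₁, and let f_{n,h} denote the total weight of Motzkin walks of length n whose height equals h. Then, with σ = √(P″(1)/P(1)), the height rescaled by √n converges in distribution to the half-normal law H(σ): for every real x ≥ 0, lim_{n→∞} (Σ_{h ≤ x√n} f_{n,h})/P(1)ⁿ = ∫_0^x √(2/(πσ²)) · exp(−t²/(2σ²)) dt. -/

import Mathlib

open scoped BigOperators Classical

/-- Value of a step encoded by `Fin 3`: `0 ↦ -1`, `1 ↦ 0`, `2 ↦ +1`. -/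
def stepVal (s : Fin 3) : ℤ := (s : ℤ) - 1

/-- Weight of a single step: `p₋₁` for `-1`, `p₀` for `0`, `p₁` for `+1`. -/
def stepWeight (pm p0 p1 : ℝ) (s : Fin 3) : ℝ :=
  if s = 0 then pm else if s = 1 then p0 else p1

/-- Weight of a Motzkin walk (product of its step weights). -/
def walkWeight (pm p0 p1 : ℝ) {n : ℕ} (w : Fin n → Fin 3) : ℝ :=
  ∏ i, stepWeight pm p0 p1 (w i)

/-- Partial sum `ω_j` of the walk `w`. -/
def psum {n : ℕ} (w : Fin n → Fin 3) (j : ℕ) : ℤ :=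
  ∑ i ∈ Finset.univ.filter (fun i : Fin n => (i : ℕ) < j), stepVal (w i)

/-- Total weight of Motzkin bridges of length `n`. -/
noncomputable def bridgeW (pm p0 p1 : ℝ) (n : ℕ) : ℝ :=
  ∑ w ∈ Finset.univ.filter (fun w : Fin n → Fin 3 => psum w n = 0),
    walkWeight pm p0 p1 w

/-- Number of returns to zero of a walk of length `n`. -/
def retZero {n : ℕ} (w : Fin n → Fin 3) : ℕ :=
  ((Finset.Icc 1 n).filter (fun j => psum w j = 0)).card

/-- Total weight of walks of length `n` with exactly `k` returns to zero. -/
noncomputable def walkRetW (pm p0 p1 : ℝ) (n k : ℕ) : ℝ :=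
  ∑ w ∈ Finset.univ.filter (fun w : Fin n → Fin 3 => retZero w = k),
    walkWeight pm p0 p1 w

/-- Number of sign changes of a walk of length `n`. -/
def signChanges {n : ℕ} (w : Fin n → Fin 3) : ℕ :=
  (((Finset.range (n+1)) ×ˢ (Finset.range (n+1))).filter
    (fun p => p.1 < p.2 ∧ psum w p.1 * psum w p.2 < 0 ∧
      ∀ l ∈ Finset.Ioo p.1 p.2, psum w l = 0)).card

/-- Total weight of bridges of length `n` with exactly `k` sign changes. -/
noncomputable def bridgeSignW (pm p0 p1 : ℝ) (n k : ℕ) : ℝ :=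
  ∑ w ∈ Finset.univ.filter
      (fun w : Fin n → Fin 3 => psum w n = 0 ∧ signChanges w = k),
    walkWeight pm p0 p1 w

/-- Total weight of positive excursions of length `n`. -/
noncomputable def posExcW (pm p0 p1 : ℝ) (n : ℕ) : ℝ :=
  ∑ w ∈ Finset.univ.filter
      (fun w : Fin n → Fin 3 => psum w n = 0 ∧ ∀ j ∈ Finset.range (n+1), 0 ≤ psum w j),
    walkWeight pm p0 p1 w

/-- Total weight of negative excursions of length `n`. -/
noncomputable def negExcW (pm p0 p1 : ℝ) (n : ℕ) : ℝ :=
  ∑ w ∈ Finset.univ.filter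
      (fun w : Fin n → Fin 3 => psum w n = 0 ∧ ∀ j ∈ Finset.range (n+1), psum w j ≤ 0),
    walkWeight pm p0 p1 w

/-- A positive bridge: a bridge whose last nonzero partial sum is positive. -/
def IsPosBridge {n : ℕ} (w : Fin n → Fin 3) : Prop :=
  psum w n = 0 ∧ ∃ j ∈ Finset.range (n+1),
    0 < psum w j ∧ ∀ l ∈ Finset.Ioc j n, psum w l = 0

/-- A negative bridge: a bridge whose last nonzero partial sum is negative. -/
def IsNegBridge {n : ℕ} (w : Fin n → Fin 3) : Prop :=
  psum w n = 0 ∧ ∃ j ∈ Finset.range (n+1),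
    psum w j < 0 ∧ ∀ l ∈ Finset.Ioc j n, psum w l = 0

instance {n : ℕ} (w : Fin n → Fin 3) : Decidable (IsPosBridge w) := by
  unfold IsPosBridge; infer_instance

instance {n : ℕ} (w : Fin n → Fin 3) : Decidable (IsNegBridge w) := by
  unfold IsNegBridge; infer_instance

/-- Total weight of positive bridges of length `n` with `k` sign changes. -/
noncomputable def posBridgeSignW (pm p0 p1 : ℝ) (n k : ℕ) : ℝ :=
  ∑ w ∈ Finset.univ.filter
      (fun w : Fin n → Fin 3 => IsPosBridge w ∧ signChanges w = k),
    walkWeight pm p0 p1 w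

/-- Total weight of negative bridges of length `n` with `k` sign changes. -/
noncomputable def negBridgeSignW (pm p0 p1 : ℝ) (n k : ℕ) : ℝ :=
  ∑ w ∈ Finset.univ.filter
      (fun w : Fin n → Fin 3 => IsNegBridge w ∧ signChanges w = k),
    walkWeight pm p0 p1 w

/-- Total weight of walks of length `n` with `k` sign changes. -/
noncomputable def walkSignW (pm p0 p1 : ℝ) (n k : ℕ) : ℝ :=
  ∑ w ∈ Finset.univ.filter (fun w : Fin n → Fin 3 => signChanges w = k),
    walkWeight pm p0 p1 w

/-- Height of a walk of length `n` (as a natural number; it is `max_j ω_j ≥ 0`). -/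
def height {n : ℕ} (w : Fin n → Fin 3) : ℕ :=
  (Finset.range (n+1)).sup (fun j => (psum w j).toNat)

/-- Total weight of walks of length `n` of height exactly `h`. -/
noncomputable def heightW (pm p0 p1 : ℝ) (n h : ℕ) : ℝ :=
  ∑ w ∈ Finset.univ.filter (fun w : Fin n → Fin 3 => height w = h),
    walkWeight pm p0 p1 w

/-!
For symmetric steps the height of a walk with endpoint `S` has the same law as the endpoint folded
at `-1/2`, that is, as `|S + 1/2| - 1/2`. This differs from `|S|` by at most `1`, so after rescaling
by `√n` the central limit theorem yields the law of `|N(0, σ²)|`, which is half-normal.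
-/

open Filter MeasureTheory ProbabilityTheory Topology

theorem neg_one_le_stepVal (s : Fin 3) : -1 ≤ stepVal s := by
  unfold stepVal
  omega

theorem stepWeight_nonneg {pm p0 p1 : ℝ} (hpm : 0 ≤ pm) (hp0 : 0 ≤ p0) (hp1 : 0 ≤ p1)
    (s : Fin 3) : 0 ≤ stepWeight pm p0 p1 s := by
  unfold stepWeight
  split_ifs <;> assumption

theorem stepVal_rev (s : Fin 3) : stepVal s.rev = -stepVal s := by
  fin_cases s <;> rfl

theorem stepWeight_rev (pm p0 p1 : ℝ) (s : Fin 3) :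
    stepWeight pm p0 p1 s.rev = stepWeight p1 p0 pm s := by
  fin_cases s <;> rfl

theorem psum_zero {n : ℕ} (w : Fin n → Fin 3) : psum w 0 = 0 := by
  simp [psum]

theorem psum_cons_succ {n : ℕ} (s : Fin 3) (w : Fin n → Fin 3) (j : ℕ) :
    psum (Fin.cons s w : Fin (n + 1) → Fin 3) (j + 1) = stepVal s + psum w j := by
  simp [psum, Finset.sum_filter, Fin.sum_univ_succ]

theorem psum_self {n : ℕ} (w : Fin n → Fin 3) : psum w n = ∑ i, stepVal (w i) := by
  simp [psum]

theorem height_le_iff {n : ℕ} (w : Fin n → Fin 3) (H : ℤ) :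
    (height w : ℤ) ≤ H ↔ ∀ j ≤ n, psum w j ≤ H := by
  rcases le_or_gt 0 H with hH | hH
  · lift H to ℕ using hH
    simp [height, Finset.sup_le_iff]
  · refine iff_of_false (by omega) fun h => ?_
    have h0 := h 0 n.zero_le
    rw [psum_zero] at h0
    omega

theorem height_cons {n : ℕ} (s : Fin 3) (w : Fin n → Fin 3) :
    height (Fin.cons s w : Fin (n + 1) → Fin 3) = (stepVal s + height w).toNat := by
  refine eq_of_forall_ge_iff fun H => ?_
  rw [Int.toNat_le, ← le_sub_iff_add_le', height_le_iff, ← Nat.cast_le (α := ℤ), height_le_iff]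
  refine ⟨fun h j hj => ?_, fun h j hj => ?_⟩
  · have := h (j + 1) (by omega)
    rw [psum_cons_succ] at this
    omega
  · rcases j with _ | j
    · rw [psum_zero]
      omega
    · have := h j (by omega)
      rw [psum_cons_succ]
      omega

theorem sum_range_heightW (pm p0 p1 : ℝ) (n H : ℕ) :
    ∑ h ∈ Finset.range (H + 1), heightW pm p0 p1 n h =
      ∑ w : Fin n → Fin 3 with height w ≤ H, walkWeight pm p0 p1 w := by
  simp only [heightW, Finset.sum_fiberwise_eq_sum_filter, Finset.mem_range, Nat.lt_succ_iff]

theorem walkWeight_cons (pm p0 p1 : ℝ) {n : ℕ} (s : Fin 3) (w : Fin n → Fin 3) :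
    walkWeight pm p0 p1 (Fin.cons s w : Fin (n + 1) → Fin 3) =
      stepWeight pm p0 p1 s * walkWeight pm p0 p1 w := by
  simp [walkWeight, Fin.prod_univ_succ]

theorem sum_walkWeight_succ (pm p0 p1 : ℝ) {n : ℕ} (φ : (Fin (n + 1) → Fin 3) → ℝ) :
    ∑ w, walkWeight pm p0 p1 w * φ w =
      ∑ s, stepWeight pm p0 p1 s *
        ∑ w : Fin n → Fin 3, walkWeight pm p0 p1 w * φ (Fin.cons s w) := by
  simp only [← (Fin.consEquiv fun _ : Fin (n + 1) => Fin 3).sum_comp, Fintype.sum_prod_type,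
    Fin.consEquiv, Equiv.coe_fn_mk, walkWeight_cons, mul_assoc, Finset.mul_sum]

/-- Reflection of the negative integers across `-1/2`: `k ≥ 0` is fixed and `-1, -2, …` go to
`0, 1, …`. It turns the endpoint of a walk into a variable distributed as the height. -/
def foldNeg (k : ℤ) : ℕ := (max k (-k - 1)).toNat

theorem foldNeg_cast (k : ℤ) : (foldNeg k : ℝ) = max (k : ℝ) (-k - 1) := by
  rw [foldNeg, ← Int.cast_natCast, Int.toNat_of_nonneg (by omega)]
  push_cast
  rfl

theorem foldNeg_add_of_nonneg {k s : ℤ} (hk : 0 ≤ k) (hs : -1 ≤ s) :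
    foldNeg (s + k) = (s + foldNeg k).toNat := by
  unfold foldNeg
  omega

theorem foldNeg_neg_add_of_neg {k s : ℤ} (hk : k < 0) (hs : -1 ≤ s) :
    foldNeg (-s + k) = (s + foldNeg k).toNat := by
  unfold foldNeg
  omega

theorem sum_stepWeight_mul_foldNeg_add (p p0 : ℝ) (f : ℕ → ℝ) (k : ℤ) :
    ∑ s, stepWeight p p0 p s * f (foldNeg (stepVal s + k)) =
      ∑ s, stepWeight p p0 p s * f (stepVal s + foldNeg k).toNat := by
  rcases le_or_gt 0 k with hk | hk
  · simp only [foldNeg_add_of_nonneg hk (neg_one_le_stepVal _)]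
  · rw [← Equiv.sum_comp Fin.revPerm]
    simp only [Fin.revPerm_apply, stepWeight_rev, stepVal_rev,
      foldNeg_neg_add_of_neg hk (neg_one_le_stepVal _)]

-- Prepending a step `s` turns the height `h` into `(s + h)⁺`; by the symmetry of the step weights
-- the folded endpoint evolves, in law, by the same recursion.
theorem sum_walkWeight_mul_height (p p0 : ℝ) (n : ℕ) (f : ℕ → ℝ) :
    ∑ w : Fin n → Fin 3, walkWeight p p0 p w * f (height w) =
      ∑ w : Fin n → Fin 3, walkWeight p p0 p w * f (foldNeg (psum w n)) := by
  induction n generalizing f with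
  | zero => simp [height, psum, foldNeg]
  | succ n ih =>
    calc ∑ w : Fin (n + 1) → Fin 3, walkWeight p p0 p w * f (height w)
        = ∑ s, stepWeight p p0 p s * ∑ w : Fin n → Fin 3,
            walkWeight p p0 p w * f (stepVal s + height w).toNat := by
          simp only [sum_walkWeight_succ, height_cons]
      _ = ∑ s, stepWeight p p0 p s * ∑ w : Fin n → Fin 3,
            walkWeight p p0 p w * f (stepVal s + foldNeg (psum w n)).toNat := by
          simp only [fun s => ih fun h => f (stepVal s + h).toNat]
      _ = ∑ w : Fin n → Fin 3, walkWeight p p0 p w *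
            ∑ s, stepWeight p p0 p s * f (stepVal s + foldNeg (psum w n)).toNat := by
          simp only [Finset.mul_sum, mul_left_comm]
          exact Finset.sum_comm
      _ = ∑ w : Fin n → Fin 3, walkWeight p p0 p w *
            ∑ s, stepWeight p p0 p s * f (foldNeg (stepVal s + psum w n)) := by
          simp only [sum_stepWeight_mul_foldNeg_add]
      _ = ∑ w : Fin (n + 1) → Fin 3, walkWeight p p0 p w * f (foldNeg (psum w (n + 1))) := by
          simp only [sum_walkWeight_succ, psum_cons_succ, Finset.mul_sum, mul_left_comm]
          exact Finset.sum_comm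

section RandomWalk

/-- The law of a single step, drawn with probability proportional to its weight. -/
noncomputable def stepLaw (pm p0 p1 : ℝ) : Measure (Fin 3) :=
  ∑ s, ENNReal.ofReal (stepWeight pm p0 p1 s / (pm + p0 + p1)) • Measure.dirac s

variable {pm p0 p1 : ℝ}

theorem stepLaw_real_singleton (hpm : 0 ≤ pm) (hp0 : 0 ≤ p0) (hp1 : 0 ≤ p1) (s : Fin 3) :
    (stepLaw pm p0 p1).real {s} = stepWeight pm p0 p1 s / (pm + p0 + p1) := by
  have hs : 0 ≤ stepWeight pm p0 p1 s / (pm + p0 + p1) :=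
    div_nonneg (stepWeight_nonneg hpm hp0 hp1 s) (by positivity)
  simp [stepLaw, measureReal_def, Set.indicator, hs]

theorem isProbabilityMeasure_stepLaw (hpm : 0 < pm) (hp0 : 0 ≤ p0) (hp1 : 0 ≤ p1) :
    IsProbabilityMeasure (stepLaw pm p0 p1) := by
  have hP : pm + p0 + p1 ≠ 0 := by positivity
  have hsum : ∑ s, stepWeight pm p0 p1 s / (pm + p0 + p1) = 1 := by
    rw [← Finset.sum_div, Fin.sum_univ_three]
    exact div_self hP
  constructor
  simp only [stepLaw, Measure.finsetSum_apply, Measure.smul_apply, measure_univ, smul_eq_mul,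
    mul_one]
  rw [← ENNReal.ofReal_sum_of_nonneg, hsum, ENNReal.ofReal_one]
  exact fun s _ => div_nonneg (stepWeight_nonneg hpm.le hp0 hp1 s) (by positivity)

theorem integral_stepLaw (hpm : 0 < pm) (hp0 : 0 ≤ p0) (hp1 : 0 ≤ p1) (f : Fin 3 → ℝ) :
    ∫ s, f s ∂stepLaw pm p0 p1 = (pm * f 0 + p0 * f 1 + p1 * f 2) / (pm + p0 + p1) := by
  have := isProbabilityMeasure_stepLaw hpm hp0 hp1
  rw [integral_fintype .of_finite]
  simp only [stepLaw_real_singleton hpm.le hp0 hp1, smul_eq_mul, div_mul_eq_mul_div,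
    ← Finset.sum_div, Fin.sum_univ_three]
  rfl

variable {Ω : Type*} [MeasurableSpace Ω] {P : Measure Ω} {X : ℕ → Ω → Fin 3}

theorem measureReal_setOf_walk (hpm : 0 < pm) (hp0 : 0 ≤ p0) (hp1 : 0 ≤ p1)
    (hX : ∀ i, HasLaw (X i) (stepLaw pm p0 p1) P) (hindep : iIndepFun X P) (n : ℕ)
    (A : (Fin n → Fin 3) → Prop) [DecidablePred A] :
    P.real {ω | A fun i => X i ω} =
      (∑ w with A w, walkWeight pm p0 p1 w) / (pm + p0 + p1) ^ n := by
  have := isProbabilityMeasure_stepLaw hpm hp0 hp1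
  have hlaw : HasLaw (fun ω (i : Fin n) => X i ω) (Measure.pi fun _ => stepLaw pm p0 p1) P :=
    (hindep.precomp Fin.val_injective).hasLaw_pi fun i => hX i
  have hA : {w | A w} = ((Finset.univ.filter A : Finset (Fin n → Fin 3)) : Set _) := by simp
  rw [hlaw.measureReal_eq (p := A) (Set.toFinite _).measurableSet, hA, ← sum_measureReal_singleton,
    Finset.sum_div]
  refine Finset.sum_congr rfl fun w _ => ?_
  rw [measureReal_def, Measure.pi_singleton, ENNReal.toReal_prod, walkWeight, ← Fin.prod_const,
    ← Finset.prod_div_distrib]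
  exact Finset.prod_congr rfl fun i _ => stepLaw_real_singleton hpm.le hp0 hp1 (w i)

theorem measureReal_foldNeg_psum_le {p p0 : ℝ} (hp : 0 < p) (hp0 : 0 ≤ p0)
    (hX : ∀ i, HasLaw (X i) (stepLaw p p0 p) P) (hindep : iIndepFun X P) (n H : ℕ) :
    P.real {ω | foldNeg (psum (fun i : Fin n => X i ω) n) ≤ H} =
      (∑ h ∈ Finset.range (H + 1), heightW p p0 p n h) / (p + p0 + p) ^ n := by
  rw [measureReal_setOf_walk hp hp0 hp.le hX hindep n fun w => foldNeg (psum w n) ≤ H,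
    sum_range_heightW]
  simpa [Finset.sum_filter] using congrArg (· / (p + p0 + p) ^ n)
    (sum_walkWeight_mul_height p p0 n fun h => if h ≤ H then 1 else 0).symm

theorem integral_comp_stepVal (hpm : 0 < pm) (hp0 : 0 ≤ p0) (hp1 : 0 ≤ p1) {X : Ω → Fin 3}
    (hX : HasLaw X (stepLaw pm p0 p1) P) (f : ℝ → ℝ) :
    ∫ ω, f (stepVal (X ω)) ∂P = (pm * f (-1) + p0 * f 0 + p1 * f 1) / (pm + p0 + p1) := by
  have := hX.integral_comp (f := fun s => f (stepVal s))
    (measurable_of_finite _).aestronglyMeasurable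
  rw [integral_stepLaw hpm hp0 hp1] at this
  simpa [Function.comp_def, stepVal] using this

theorem tendstoInDistribution_psum [IsProbabilityMeasure P] {p p0 : ℝ} (hp : 0 < p) (hp0 : 0 ≤ p0)
    (hX : ∀ i, HasLaw (X i) (stepLaw p p0 p) P) (hindep : iIndepFun X P) :
    TendstoInDistribution
      (fun (n : ℕ) ω => (√n)⁻¹ * (psum (fun i : Fin n => X i ω) n : ℝ)) atTop id
      (fun _ => P) (gaussianReal 0 (2 * p / (p + p0 + p)).toNNReal) := by
  let Y : ℕ → Ω → ℝ := fun i ω => (stepVal (X i ω) : ℝ)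
  have hval : Measurable fun s => (stepVal s : ℝ) := measurable_of_finite _
  have hY_meas (i : ℕ) : AEMeasurable (Y i) P := hval.comp_aemeasurable (hX i).aemeasurable
  have hY_mean : P[Y 0] = 0 := by
    simpa using integral_comp_stepVal hp hp0 hp.le (hX 0) id
  have hY_var : Var[Y 0; P] = 2 * p / (p + p0 + p) := by
    rw [variance_of_integral_eq_zero (hY_meas 0) hY_mean,
      integral_comp_stepVal hp hp0 hp.le (hX 0) (· ^ 2)]
    ring
  have hY_ident (i : ℕ) : IdentDistrib (Y i) (Y 0) P P :=
    ((hX i).identDistrib (hX 0)).comp hval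
  have hY_memLp : MemLp (Y 0) 2 P :=
    .of_bound (hY_meas 0).aestronglyMeasurable 1 <| .of_forall fun ω => by
      have (s : Fin 3) : ‖(stepVal s : ℝ)‖ ≤ 1 := by fin_cases s <;> simp [stepVal]
      exact this _
  have hlimit : HasLaw id (gaussianReal 0 Var[Y 0; P].toNNReal)
      (gaussianReal 0 (2 * p / (p + p0 + p)).toNNReal) := by
    rw [hY_var]
    exact .id
  convert tendstoInDistribution_inv_sqrt_mul_sum_sub hlimit hY_memLp
    (hindep.comp _ fun _ => hval) hY_ident using 4 with n ω
  rw [psum_self, hY_mean, mul_zero, sub_zero, Int.cast_sum,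
    Fin.sum_univ_eq_sum_range (fun i => Y i ω)]

end RandomWalk

theorem tendsto_measureReal_le_of_tendstoInDistribution {ι Ω' : Type*} {Ω : ι → Type*}
    [∀ i, MeasurableSpace (Ω i)] [MeasurableSpace Ω'] {P : ∀ i, Measure (Ω i)} {P' : Measure Ω'}
    [∀ i, IsProbabilityMeasure (P i)] [IsProbabilityMeasure P'] {l : Filter ι}
    {Y : ∀ i, Ω i → ℝ} {Z : Ω' → ℝ} (h : TendstoInDistribution Y l Z P P') {x : ℝ}
    (hx : P' {ω | Z ω = x} = 0) :
    Tendsto (fun i => (P i).real {ω | Y i ω ≤ x}) l (𝓝 (P'.real {ω | Z ω ≤ x})) := by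
  have := Measure.isProbabilityMeasure_map h.aemeasurable_limit
  have hfrontier : P'.map Z (frontier (Set.Iic x)) = 0 := by
    rwa [frontier_Iic,
      Measure.map_apply_of_aemeasurable h.aemeasurable_limit (measurableSet_singleton x)]
  have hmap := (ENNReal.tendsto_toReal (measure_ne_top (P'.map Z) (Set.Iic x))).comp
    (ProbabilityMeasure.tendsto_measure_of_null_frontier_of_tendsto' h.tendsto hfrontier)
  simpa only [Function.comp_def, ProbabilityMeasure.coe_mk, measureReal_def, Set.preimage,
    Measure.map_apply_of_aemeasurable (h.forall_aemeasurable _) measurableSet_Iic,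
    Measure.map_apply_of_aemeasurable h.aemeasurable_limit measurableSet_Iic, Set.mem_Iic]
    using hmap

theorem gaussianReal_real_abs_le {v : NNReal} (hv : v ≠ 0) {x : ℝ} (hx : 0 ≤ x) :
    (gaussianReal 0 v).real {y | |y| ≤ x} =
      ∫ t in (0 : ℝ)..x, √(2 / (Real.pi * v)) * Real.exp (-t ^ 2 / (2 * v)) := by
  have two_mul_gaussianPDFReal (t : ℝ) : 2 * gaussianPDFReal 0 v t =
      √(2 / (Real.pi * v)) * Real.exp (-t ^ 2 / (2 * v)) := by
    have hc : 2 * (√(2 * Real.pi * v))⁻¹ = √(2 / (Real.pi * v)) := by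
      have : 2 / (Real.pi * v) = 2 ^ 2 * (2 * Real.pi * v)⁻¹ := by
        field_simp
      rw [this, Real.sqrt_mul (sq_nonneg 2), Real.sqrt_sq zero_le_two, Real.sqrt_inv]
    rw [gaussianPDFReal, sub_zero, ← mul_assoc, hc]
  have gaussianPDFReal_abs (t : ℝ) : gaussianPDFReal 0 v |t| = gaussianPDFReal 0 v t := by
    simp [gaussianPDFReal]
  have hmeas : MeasurableSet {y : ℝ | |y| ≤ x} := measurableSet_le measurable_abs measurable_const
  calc (gaussianReal 0 v).real {y | |y| ≤ x}
      = ∫ t in {y | |y| ≤ x}, gaussianPDFReal 0 v t := by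
        rw [measureReal_def, gaussianReal_apply_eq_integral _ hv, ENNReal.toReal_ofReal
          (integral_nonneg fun t => gaussianPDFReal_nonneg 0 v t)]
    _ = ∫ t, (Set.Iic x).indicator (gaussianPDFReal 0 v) |t| := by
        rw [← integral_indicator hmeas]
        simp [Set.indicator, gaussianPDFReal_abs]
    _ = 2 * ∫ t in Set.Ioi 0, (Set.Iic x).indicator (gaussianPDFReal 0 v) t := integral_comp_abs
    _ = 2 * ∫ t in (0 : ℝ)..x, gaussianPDFReal 0 v t := by
        rw [setIntegral_indicator measurableSet_Iic, Set.Ioi_inter_Iic,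
          intervalIntegral.integral_of_le hx]
    _ = _ := by
        simp only [← intervalIntegral.integral_const_mul, two_mul_gaussianPDFReal]

theorem tendstoInDistribution_foldNeg {Ω Ω' : Type*} [MeasurableSpace Ω] [MeasurableSpace Ω']
    {P : Measure Ω} {P' : Measure Ω'} [IsProbabilityMeasure P] [IsProbabilityMeasure P']
    {S : ℕ → Ω → ℤ} {Z : Ω' → ℝ} {a : ℕ → ℝ} (ha_nonneg : ∀ n, 0 ≤ a n)
    (ha : Tendsto a atTop (𝓝 0))
    (h : TendstoInDistribution (fun n ω => a n * (S n ω : ℝ)) atTop Z (fun _ => P) P') :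
    TendstoInDistribution (fun n ω => a n * (foldNeg (S n ω) : ℝ)) atTop
      (fun ω => |Z ω|) (fun _ => P) P' := by
  have slutsky := h.continuous_comp_prodMk_of_tendstoInMeasure_const
    (g := fun z : ℝ × ℝ => max z.1 (-z.1 - z.2)) (by fun_prop)
    (Y := fun n _ => a n) (c := 0) (tendstoInMeasure_of_tendsto_ae
      (fun _ => aestronglyMeasurable_const) (.of_forall fun _ => ha)) fun _ => aemeasurable_const
  convert slutsky using 3 with n ω ω
  · rw [foldNeg_cast, mul_max_of_nonneg _ _ (ha_nonneg n), mul_sub_one, mul_neg]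
  · rw [sub_zero]
    rfl

theorem height_half_normal_general (pm p0 p1 : ℝ)
    (hpm : 0 < pm) (hp0 : 0 ≤ p0) (hdrift : p1 = pm) :
    let P1 : ℝ := pm + p0 + p1
    let σ : ℝ := Real.sqrt (2 * pm / P1)
    ∀ x : ℝ, 0 ≤ x →
      Tendsto
        (fun n : ℕ =>
          (∑ h ∈ Finset.range (⌊x * √n⌋₊ + 1), heightW pm p0 p1 n h) / P1 ^ n)
        atTop
        (𝓝 (∫ t in (0 : ℝ)..x,
          √(2 / (Real.pi * σ ^ 2)) * Real.exp (-t ^ 2 / (2 * σ ^ 2)))) := by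
  subst hdrift
  intro P1 σ x hx
  have hvar : 0 < 2 * p1 / P1 := by positivity
  set v : NNReal := (2 * p1 / P1).toNNReal
  have hv0 : v ≠ 0 := (Real.toNNReal_pos.2 hvar).ne'
  have hσ : σ ^ 2 = v := by rw [Real.sq_sqrt hvar.le, Real.coe_toNNReal _ hvar.le]
  have := isProbabilityMeasure_stepLaw hpm hp0 hpm.le
  have := nullSingletonClass_gaussianReal (μ := 0) hv0
  obtain ⟨Ω, _, P, X, -, hX, hindep, _⟩ := exists_iid ℕ (stepLaw p1 p0 p1)
  have hscale : Tendsto (fun n : ℕ => (√n)⁻¹) atTop (𝓝 0) :=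
    tendsto_inv_atTop_zero.comp (Real.tendsto_sqrt_atTop.comp tendsto_natCast_atTop_atTop)
  have hlimit := tendstoInDistribution_foldNeg (fun n => by positivity) hscale
    (tendstoInDistribution_psum hpm hp0 hX hindep)
  rw [hσ, ← gaussianReal_real_abs_le hv0 hx]
  refine (tendsto_measureReal_le_of_tendstoInDistribution hlimit ?_).congr' ?_
  · exact ((Set.toFinite {x, -x}).subset fun y hy => eq_or_eq_neg_of_abs_eq hy).measure_zero _
  · filter_upwards [eventually_gt_atTop 0] with n hn
    have hn : 0 < √(n : ℝ) := by positivity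
    rw [← measureReal_foldNeg_psum_le hpm hp0 hX hindep]
    simp only [Nat.le_floor_iff (mul_nonneg hx hn.le), inv_mul_le_iff₀ hn, mul_comm _ x]

/-- **Limit law for the height of Motzkin walks, zero drift**: the height rescaled by
`√n` converges in distribution to the half-normal law `H(σ)` with `σ = √(P″(1)/P(1))`. -/
theorem height_half_normal (pm p0 p1 : ℝ)
    (hpm : 0 < pm) (hp0 : 0 < p0) (hp1 : 0 < p1) (hdrift : p1 = pm) :
    let P1 : ℝ := pm + p0 + p1
    let σ : ℝ := Real.sqrt (2 * pm / P1)
    ∀ x : ℝ, 0 ≤ x →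
      Filter.Tendsto
        (fun n : ℕ =>
          (∑ h ∈ Finset.range (⌊x * Real.sqrt n⌋₊ + 1), heightW pm p0 p1 n h) / P1 ^ n)
        Filter.atTop
        (nhds (∫ t in (0:ℝ)..x,
          Real.sqrt (2 / (Real.pi * σ ^ 2)) * Real.exp (-t ^ 2 / (2 * σ ^ 2)))) :=
  height_half_normal_general pm p0 p1 hpm hp0.le hdrift
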